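/- Let v : [0,T] → ℝ be absolutely continuous and let 0 < α < 1. Then for almost every t ∈ [0,T], v(t) · (ᶜD₀ₜ^α v)(t) ≥ (1/2) (ᶜD₀ₜ^α v²)(t), where ᶜD₀ₜ^α denotes the left Caputo fractional derivative (ᶜD₀ₜ^α w)(t) = (1/Γ(1-α)) ∫₀ᵗ w'(τ)/(t-τ)^α dτ. -/

import Mathlib

open MeasureTheory intervalIntegral

/-- The left Caputo fractional derivative of order `α ∈ (0,1)`:
`(ᶜD₀ₜ^α w)(t) = (1/Γ(1-α)) ∫₀ᵗ w'(τ) (t-τ)^(-α) dτ`. -/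
noncomputable def caputoDeriv (α : ℝ) (w : ℝ → ℝ) (t : ℝ) : ℝ :=
  (1 / Real.Gamma (1 - α)) * ∫ τ in (0:ℝ)..t, deriv w τ * (t - τ) ^ (-α)

/-!
Since `(v²)' = 2 v v'`, the difference of the two sides at `t` is a nonnegative multiple of
`∫₀ᵗ k(s) g(s) ds` with `k(s) = (t - s)^(-α)` and `g(s) = (v(t) - v(s)) v'(s)`. The kernel `k` is
nonnegative and increasing, so each superlevel set `{k > c}` is an interval ending at `t`, and
`∫_s^t g = (v(t) - v(s))² / 2 ≥ 0`. Writing `k` as the superposition of the indicators of its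
superlevel sets gives `∫₀ᵗ k g ≥ 0`. This needs `k g` to be integrable, which holds for
almost every `t` because `∫₀ᵗ k v'` is a convolution of two integrable functions and `v` is
bounded.
-/

open Set

lemma integral_Ioi_indicator_Iio_const {E : Type*} [NormedAddCommGroup E] [NormedSpace ℝ E]
    [CompleteSpace E] {r : ℝ} (hr : 0 ≤ r) (y : E) :
    ∫ c in Ioi 0, (Iio r).indicator (fun _ => y) c = r • y := by
  rw [setIntegral_indicator measurableSet_Iio, Ioi_inter_Iio, setIntegral_const,
    Real.volume_real_Ioo_of_le hr, sub_zero]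

lemma integral_smul_eq_integral_Ioi_setIntegral_lt {X E : Type*} [MeasurableSpace X]
    [NormedAddCommGroup E] [NormedSpace ℝ E] [CompleteSpace E] {μ : Measure X} [SFinite μ]
    {k : X → ℝ} {g : X → E} (hk : AEMeasurable k μ) (hk_nonneg : 0 ≤ᵐ[μ] k)
    (hg : AEStronglyMeasurable g μ) (hkg : Integrable (fun x => k x • g x) μ) :
    ∫ x, k x • g x ∂μ = ∫ c in Ioi 0, ∫ x in {x | c < k x}, g x ∂μ := by
  let F : X → ℝ → E := fun x => (Iio (k x)).indicator fun _ => g x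
  have hF_meas : AEStronglyMeasurable (Function.uncurry F) (μ.prod (volume.restrict (Ioi 0))) :=
    hg.comp_fst.indicator₀ (s := {p | p.2 < k p.1})
      (nullMeasurableSet_lt measurable_snd.aemeasurable hk.comp_fst)
  have integrable_slice (x : X) : Integrable (F x) (volume.restrict (Ioi 0)) := by
    rw [integrable_indicator_iff measurableSet_Iio, IntegrableOn,
      Measure.restrict_restrict measurableSet_Iio, Iio_inter_Ioi]
    exact integrable_const _
  have hF_int : Integrable (Function.uncurry F) (μ.prod (volume.restrict (Ioi 0))) := by
    refine (integrable_prod_iff hF_meas).2 ⟨.of_forall integrable_slice, hkg.norm.congr ?_⟩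
    filter_upwards [hk_nonneg] with x hx
    simp only [F, Function.uncurry_apply_pair, norm_indicator_eq_indicator_norm,
      integral_Ioi_indicator_Iio_const hx, norm_smul, Real.norm_of_nonneg hx, smul_eq_mul]
  calc ∫ x, k x • g x ∂μ
      = ∫ x, (∫ c in Ioi 0, F x c) ∂μ := by
        refine integral_congr_ae ?_
        filter_upwards [hk_nonneg] with x hx
        exact (integral_Ioi_indicator_Iio_const hx (g x)).symm
    _ = ∫ c in Ioi 0, (∫ x, F x c ∂μ) := integral_integral_swap hF_int
    _ = ∫ c in Ioi 0, ∫ x in {x | c < k x}, g x ∂μ := by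
        refine integral_congr_ae (.of_forall fun c => ?_)
        exact integral_indicator₀ (nullMeasurableSet_lt aemeasurable_const hk)

lemma setIntegral_nonneg_of_forall_Ioo_subset {a b : ℝ} {g : ℝ → ℝ} {s : Set ℝ}
    (hg : ∀ c ∈ Icc a b, 0 ≤ ∫ x in c..b, g x) (hs : s ⊆ Ioo a b)
    (hs_upper : ∀ x ∈ s, Ioo x b ⊆ s) :
    0 ≤ ∫ x in s, g x := by
  rcases s.eq_empty_or_nonempty with rfl | hne
  · simp
  have hbdd : BddBelow s := ⟨a, fun x hx => (hs hx).1.le⟩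
  have hinf : sInf s ∈ Icc a b :=
    ⟨le_csInf hne fun x hx => (hs hx).1.le,
      hne.elim fun x hx => (csInf_le hbdd hx).trans (hs hx).2.le⟩
  have hs_Ioo : Ioo (sInf s) b ⊆ s := fun x hx =>
    let ⟨y, hy, hyx⟩ := exists_lt_of_csInf_lt hne hx.1
    hs_upper y hy ⟨hyx, hx.2⟩
  have hs_Ico : s ⊆ Ico (sInf s) b := fun x hx => ⟨csInf_le hbdd hx, (hs hx).2⟩
  have hs_ae : s =ᵐ[volume] Ioc (sInf s) b :=
    (hs_Ico.eventuallyLE.trans Ico_ae_eq_Ioc.le).antisymm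
      (Ioo_ae_eq_Ioc.symm.le.trans hs_Ioo.eventuallyLE)
  rw [setIntegral_congr_set hs_ae, ← integral_of_le hinf.2]
  exact hg _ hinf

lemma integral_mul_nonneg_of_monotoneOn {a b : ℝ} (hab : a ≤ b) {k g : ℝ → ℝ}
    (hk : MonotoneOn k (Ioo a b)) (hk_nonneg : ∀ x ∈ Ioo a b, 0 ≤ k x)
    (hg : IntervalIntegrable g volume a b)
    (hkg : IntervalIntegrable (fun x => k x * g x) volume a b)
    (hg_nonneg : ∀ c ∈ Icc a b, 0 ≤ ∫ x in c..b, g x) :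
    0 ≤ ∫ x in a..b, k x * g x := by
  rw [intervalIntegrable_iff_integrableOn_Ioo_of_le hab] at hg hkg
  have layer_cake := integral_smul_eq_integral_Ioi_setIntegral_lt
    (aemeasurable_restrict_of_monotoneOn measurableSet_Ioo hk)
    (ae_restrict_of_forall_mem measurableSet_Ioo hk_nonneg) hg.aestronglyMeasurable hkg
  simp only [smul_eq_mul] at layer_cake
  rw [integral_of_le hab, integral_Ioc_eq_integral_Ioo, layer_cake]
  refine integral_nonneg fun c => ?_
  rw [Measure.restrict_restrict' measurableSet_Ioo]
  exact setIntegral_nonneg_of_forall_Ioo_subset hg_nonneg inter_subset_right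
    fun x ⟨hcx, hx⟩ y hy =>
      have hy' : y ∈ Ioo a b := ⟨hx.1.trans hy.1, hy.2⟩
      ⟨hcx.trans_le (hk hx hy' hy.1.le), hy'⟩

lemma integral_sub_mul_deriv_eq_sq_div_two {v : ℝ → ℝ} {a b : ℝ}
    (hv : AbsolutelyContinuousOnInterval v a b) :
    ∫ x in a..b, (v b - v x) * deriv v x = (v b - v a) ^ 2 / 2 := by
  have by_parts := hv.integral_mul_deriv_eq_deriv_mul hv
  have hmul : IntervalIntegrable (fun x => v x * deriv v x) volume a b :=
    hv.intervalIntegrable_deriv.continuousOn_mul hv.continuousOn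
  simp only [mul_comm (deriv v _)] at by_parts
  simp only [sub_mul]
  rw [intervalIntegral.integral_sub (hv.intervalIntegrable_deriv.const_mul _) hmul,
    intervalIntegral.integral_const_mul, hv.integral_deriv_eq_sub]
  linarith

lemma integral_mul_sub_mul_deriv_nonneg {v k : ℝ → ℝ} {a b : ℝ} (hab : a ≤ b)
    (hv : AbsolutelyContinuousOnInterval v a b) (hk : MonotoneOn k (Ioo a b))
    (hk_nonneg : ∀ x ∈ Ioo a b, 0 ≤ k x)
    (hkv : IntervalIntegrable (fun x => k x * deriv v x) volume a b) :
    0 ≤ ∫ x in a..b, k x * ((v b - v x) * deriv v x) := by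
  have hsub : ContinuousOn (fun x => v b - v x) (uIcc a b) :=
    continuousOn_const.sub hv.continuousOn
  refine integral_mul_nonneg_of_monotoneOn hab hk hk_nonneg
    (hv.intervalIntegrable_deriv.continuousOn_mul hsub) ?_ fun c hc => ?_
  · simpa only [mul_left_comm] using hkv.continuousOn_mul hsub
  · have hcb : uIcc c b ⊆ uIcc a b := uIcc_subset_uIcc_right (Icc_subset_uIcc hc)
    rw [integral_sub_mul_deriv_eq_sq_div_two (hv.mono hcb)]
    positivity

lemma ae_intervalIntegrable_smul_sub {E : Type*} [NormedAddCommGroup E] [NormedSpace ℝ E]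
    {T : ℝ} (hT : 0 ≤ T) {k : ℝ → ℝ} {f : ℝ → E} (hk : IntervalIntegrable k volume 0 T)
    (hf : IntervalIntegrable f volume 0 T) :
    ∀ᵐ t, t ∈ Icc 0 T → IntervalIntegrable (fun x => k (t - x) • f x) volume 0 t := by
  rw [intervalIntegrable_iff_integrableOn_Ioo_of_le hT] at hk hf
  filter_upwards [((integrable_indicator_iff measurableSet_Ioo).2 hf).ae_convolution_exists
    (ContinuousLinearMap.lsmul ℝ ℝ).flip ((integrable_indicator_iff measurableSet_Ioo).2 hk)]
    with t hconv ht
  rw [intervalIntegrable_iff_integrableOn_Ioo_of_le ht.1]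
  refine hconv.integrable.integrableOn.congr_fun (fun x hx => ?_) measurableSet_Ioo
  have hx_mem : x ∈ Ioo 0 T := ⟨hx.1, hx.2.trans_le ht.2⟩
  have htx_mem : t - x ∈ Ioo 0 T := ⟨sub_pos.2 hx.2, by linarith [hx.1, ht.2]⟩
  simp [indicator_of_mem hx_mem, indicator_of_mem htx_mem]

lemma mul_caputoDeriv_sub_half_caputoDeriv_sq {v : ℝ → ℝ} {α t : ℝ}
    (hv : AbsolutelyContinuousOnInterval v 0 t)
    (hkv : IntervalIntegrable (fun s => (t - s) ^ (-α) * deriv v s) volume 0 t) :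
    v t * caputoDeriv α v t - 1 / 2 * caputoDeriv α (fun s => v s ^ 2) t =
      1 / Real.Gamma (1 - α) * ∫ s in 0..t, (t - s) ^ (-α) * ((v t - v s) * deriv v s) := by
  have caputo_sq : ∫ s in 0..t, deriv (fun s => v s ^ 2) s * (t - s) ^ (-α) =
      2 * ∫ s in 0..t, v s * ((t - s) ^ (-α) * deriv v s) := by
    rw [← intervalIntegral.integral_const_mul]
    refine integral_congr_ae ?_
    filter_upwards [hv.ae_differentiableAt] with s hs hs_mem
    rw [deriv_fun_pow (hs (uIoc_subset_uIcc hs_mem))]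
    ring
  have split : ∫ s in 0..t, (t - s) ^ (-α) * ((v t - v s) * deriv v s) =
      v t * (∫ s in 0..t, (t - s) ^ (-α) * deriv v s) -
        ∫ s in 0..t, v s * ((t - s) ^ (-α) * deriv v s) := by
    rw [← intervalIntegral.integral_const_mul, ← intervalIntegral.integral_sub
      (hkv.const_mul _) (hkv.continuousOn_mul hv.continuousOn)]
    exact integral_congr fun s _ => by ring
  simp only [caputoDeriv, caputo_sq, split, mul_comm (deriv v _)]
  ring

lemma monotoneOn_sub_rpow_neg {α : ℝ} (hα : 0 ≤ α) (t : ℝ) :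
    MonotoneOn (fun s => (t - s) ^ (-α)) (Iio t) := fun _ _ _ hy hxy =>
  Real.rpow_le_rpow_of_nonpos (sub_pos.2 hy) (sub_le_sub_left hxy t) (neg_nonpos.2 hα)

lemma absolutelyContinuousOnInterval_of_hasDerivAt {v v' : ℝ → ℝ} {a b : ℝ}
    (hv : ∀ x ∈ uIcc a b, HasDerivAt v (v' x) x) (hv' : IntervalIntegrable v' volume a b) :
    AbsolutelyContinuousOnInterval v a b := by
  have dist_primitive {x y : ℝ} (hx : x ∈ uIcc a b) (hy : y ∈ uIcc a b) :
      dist (v x) (v y) = dist (∫ s in a..x, v' s) (∫ s in a..y, v' s) := by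
    rw [Real.dist_eq, Real.dist_eq, integral_interval_sub_left
      (hv'.mono_set (uIcc_subset_uIcc_left hx)) (hv'.mono_set (uIcc_subset_uIcc_left hy)),
      integral_eq_sub_of_hasDerivAt (fun s hs => hv s (uIcc_subset_uIcc hy hx hs))
        (hv'.mono_set (uIcc_subset_uIcc hy hx))]
  have primitive_ac := hv'.absolutelyContinuousOnInterval_intervalIntegral left_mem_uIcc
  rw [absolutelyContinuousOnInterval_iff] at primitive_ac ⊢
  intro ε hε
  obtain ⟨δ, hδ, hsum⟩ := primitive_ac ε hε
  refine ⟨δ, hδ, fun E hE hlen => (Finset.sum_congr rfl fun i hi => ?_).trans_lt (hsum E hE hlen)⟩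
  exact dist_primitive (hE.1 i hi).1 (hE.1 i hi).2

theorem caputo_chain_inequality_general {T α : ℝ} (hT : 0 ≤ T) (hα0 : 0 ≤ α) (hα1 : α < 1)
    {v : ℝ → ℝ} (hv : AbsolutelyContinuousOnInterval v 0 T) :
    ∀ᵐ t ∂(volume.restrict (Icc 0 T)),
      v t * caputoDeriv α v t ≥ 1 / 2 * caputoDeriv α (fun s => v s ^ 2) t := by
  rw [ae_restrict_iff' measurableSet_Icc]
  have hk : IntervalIntegrable (fun r : ℝ => r ^ (-α)) volume 0 T :=
    intervalIntegrable_rpow' (by linarith)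
  filter_upwards [ae_intervalIntegrable_smul_sub hT hk hv.intervalIntegrable_deriv] with t hkv ht
  have hv_t : AbsolutelyContinuousOnInterval v 0 t :=
    hv.mono (uIcc_subset_uIcc_left (Icc_subset_uIcc ht))
  have hΓ : 0 ≤ 1 / Real.Gamma (1 - α) :=
    one_div_nonneg.2 (Real.Gamma_nonneg_of_nonneg (by linarith))
  have hintegral := integral_mul_sub_mul_deriv_nonneg ht.1 hv_t
    ((monotoneOn_sub_rpow_neg hα0 t).mono Ioo_subset_Iio_self)
    (fun s hs => Real.rpow_nonneg (sub_nonneg.2 hs.2.le) _) (hkv ht)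
  rw [ge_iff_le, ← sub_nonneg, mul_caputoDeriv_sub_half_caputoDeriv_sq hv_t (hkv ht)]
  exact mul_nonneg hΓ hintegral

/-- For an absolutely continuous `v` on `[0,T]` (represented by a locally integrable
derivative `v'` with `v t = v 0 + ∫₀ᵗ v'`) and `0 < α < 1`, for almost every
`t ∈ [0,T]` one has `v(t) · (ᶜD₀ₜ^α v)(t) ≥ (1/2) (ᶜD₀ₜ^α v²)(t)`. -/
theorem caputo_chain_inequality (T α : ℝ) (hT : 0 < T) (hα0 : 0 < α) (hα1 : α < 1)
    (v v' : ℝ → ℝ)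
    (hderiv : ∀ t ∈ Set.Icc (0:ℝ) T, HasDerivAt v (v' t) t)
    (hint : IntervalIntegrable v' volume 0 T) :
    ∀ᵐ t ∂(volume.restrict (Set.Icc (0:ℝ) T)),
      v t * caputoDeriv α v t ≥ (1 / 2) * caputoDeriv α (fun s => (v s) ^ 2) t :=
  caputo_chain_inequality_general hT.le hα0.le hα1 <|
    absolutelyContinuousOnInterval_of_hasDerivAt (by rwa [uIcc_of_le hT.le]) hint
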